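/- Let X be a compact metric space, f_1, …, f_n : X → X contractions, A_R a nonempty compact set with ⋃_{j=1}^n f_j(A_R) = A_R, and let F be the local Hutchinson–Barnsley operator of the local IFS obtained by restricting each f_j to a closed set X_j ⊆ X, with local attractor A. If A ≠ ∅, then A = ⋂_{k ≥ 0} F^k(A_R), and hausdorffDist(F^k(A_R), A) → 0 as k → ∞. -/

import Mathlib

open Filter

/-!
Let `L < 1` be the largest contraction constant. If `B` is bounded and `F B = B`, then the supremum
over `B` of the distance to `A_R` is at most `L` times itself, so it vanishes and `B ⊆ A_R`; by
monotonicity `B ⊆ F^[k] A_R` for all `k`. Conversely, `F` commutes with decreasing intersections of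
compact sets, so `⋂ k, F^[k] A_R` is itself fixed by `F`. Since a decreasing family of compact sets
converges to its intersection, so do the sets `F^[k] A_R`.
-/

section

open Set Metric Bornology
open scoped NNReal ENNReal Topology

theorem tendsto_hausdorffEDist_iInter_of_antitone {X ι : Type*} [EMetricSpace X] [Preorder ι]
    [IsDirectedOrder ι] [Nonempty ι] {K : ι → Set X} (hK : Antitone K)
    (hKc : ∀ i, IsCompact (K i)) :
    Tendsto (fun i => hausdorffEDist (K i) (⋂ i, K i)) atTop (𝓝 0) := by
  rw [ENNReal.tendsto_nhds_zero]
  intro ε hε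
  have hnhds : ∀ x ∈ ⋂ i, K i, {y | infEDist y (⋂ i, K i) < ε} ∈ 𝓝 x := fun x hx =>
    (isOpen_lt continuous_infEDist continuous_const).mem_nhds <| by
      rwa [mem_ofPred_eq, infEDist_zero_of_mem hx]
  obtain ⟨i₀, hi₀⟩ := exists_subset_nhds_of_isCompact hK.directed_ge hKc hnhds
  filter_upwards [eventually_ge_atTop i₀] with i hi
  refine hausdorffEDist_le_of_infEDist (fun x hx => (hi₀ (hK hi hx)).le) fun x hx => ?_
  rw [infEDist_zero_of_mem (mem_iInter.1 hx i)]
  exact zero_le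

theorem infEDist_apply_le_of_mapsTo {X Y : Type*} [PseudoEMetricSpace X] [PseudoEMetricSpace Y]
    {f : X → Y} {L : ℝ≥0} (hf : LipschitzWith L f) {s : Set X} {t : Set Y} (hs : s.Nonempty)
    (hst : MapsTo f s t) (x : X) : infEDist (f x) t ≤ L * infEDist x s := by
  have := hs.to_subtype
  have infEDist_eq : infEDist x s = ⨅ y : s, edist x y := iInf_subtype'
  rw [infEDist_eq, ENNReal.mul_iInf fun h => absurd h ENNReal.coe_ne_top]
  exact le_iInf fun y => (infEDist_le_edist_of_mem (hst y.2)).trans (hf.edist_le_mul x y)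

theorem subset_closure_of_subset_iUnion_image {X ι : Type*} [PseudoMetricSpace X]
    {f : ι → X → X} {L : ℝ≥0} (hL : L < 1) (hf : ∀ j, LipschitzWith L (f j)) {B C : Set X}
    (hC : C.Nonempty) (hfC : ∀ j, MapsTo (f j) C C) (hBb : IsBounded B)
    (hB : B ⊆ ⋃ j, f j '' B) : B ⊆ closure C := by
  set r : ℝ≥0∞ := ⨆ x ∈ B, infEDist x C
  have le_r : ∀ x ∈ B, infEDist x C ≤ r := fun x hx => le_iSup₂_of_le x hx le_rfl
  have r_ne_top : r ≠ ∞ := by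
    obtain ⟨c, hc⟩ := hC
    obtain ⟨D, hD⟩ := hBb.subset_closedBall c
    refine ne_top_of_le_ne_top (ENNReal.ofReal_ne_top (r := D)) (iSup₂_le fun x hx => ?_)
    refine (infEDist_le_edist_of_mem hc).trans ?_
    rw [edist_dist]
    exact ENNReal.ofReal_le_ofReal (hD hx)
  have r_le_mul : r ≤ L * r := by
    refine iSup₂_le fun x hx => ?_
    obtain ⟨j, z, hz, rfl⟩ := mem_iUnion.1 (hB hx)
    exact (infEDist_apply_le_of_mapsTo (hf j) hC (hfC j) z).trans (by gcongr; exact le_r z hz)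
  have r_eq_zero : r = 0 := by
    by_contra hr0
    refine r_le_mul.not_gt ?_
    calc (L : ℝ≥0∞) * r < 1 * r :=
          ENNReal.mul_lt_mul_left hr0 r_ne_top (by exact_mod_cast hL)
      _ = r := one_mul r
  exact fun x hx =>
    mem_closure_iff_infEDist_zero.2 (le_antisymm ((le_r x hx).trans r_eq_zero.le) zero_le)

theorem exists_lt_one_forall_lipschitzWith {X ι : Type*} [EMetricSpace X] [Finite ι] {f : ι → X → X}
    {K : ι → ℝ≥0} (hf : ∀ j, ContractingWith (K j) (f j)) :
    ∃ L < 1, ∀ j, LipschitzWith L (f j) := by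
  have := Fintype.ofFinite ι
  exact ⟨Finset.univ.sup K, (Finset.sup_lt_iff one_pos).2 fun j _ => (hf j).1,
    fun j => (hf j).2.weaken (Finset.le_sup (Finset.mem_univ j))⟩

/-- The Hutchinson–Barnsley operator of the local iterated function system given by the
restrictions of the maps `f j` to the sets `Xs j`. Each `f j` is encoded as a total map, whose
values outside `Xs j` play no role. -/
def localHutchinson {X ι : Type*} (f : ι → X → X) (Xs : ι → Set X) (B : Set X) : Set X :=
  ⋃ j, f j '' (B ∩ Xs j)

/-- The local attractor of a local iterated function system: the union of all sets fixed by its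
Hutchinson–Barnsley operator. No compactness of these sets is required, and the attractor may be
empty. -/
def localAttractor {X ι : Type*} (f : ι → X → X) (Xs : ι → Set X) : Set X :=
  ⋃₀ {B | localHutchinson f Xs B = B}

namespace localHutchinson

variable {X ι : Type*} {f : ι → X → X} {Xs : ι → Set X}

theorem mem_iff_nonempty_inter {B : Set X} {x : X} :
    x ∈ localHutchinson f Xs B ↔ (B ∩ ⋃ j, Xs j ∩ f j ⁻¹' {x}).Nonempty := by
  simp only [localHutchinson, inter_iUnion, nonempty_iUnion, mem_iUnion, ← inter_assoc]
  rfl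

theorem mono : Monotone (localHutchinson f Xs) := fun _ _ hBC =>
  iUnion_mono fun _ => image_mono (inter_subset_inter_left _ hBC)

theorem subset_iUnion_image (B : Set X) : localHutchinson f Xs B ⊆ ⋃ j, f j '' B :=
  iUnion_mono fun _ => image_mono inter_subset_left

variable [TopologicalSpace X] [Finite ι]

theorem isCompact (hf : ∀ j, ContinuousOn (f j) (Xs j)) (hXs : ∀ j, IsClosed (Xs j)) {B : Set X}
    (hB : IsCompact B) : IsCompact (localHutchinson f Xs B) :=
  isCompact_iUnion fun j => (hB.inter_right (hXs j)).image_of_continuousOn <|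
    (hf j).mono inter_subset_right

theorem isCompact_iterate (hf : ∀ j, ContinuousOn (f j) (Xs j)) (hXs : ∀ j, IsClosed (Xs j))
    {B : Set X} (hB : IsCompact B) (k : ℕ) : IsCompact ((localHutchinson f Xs)^[k] B) := by
  induction k with
  | zero => exact hB
  | succ k ih =>
    rw [Function.iterate_succ_apply']
    exact isCompact hf hXs ih

variable [T2Space X]

theorem map_iInter_of_directed {κ : Type*} [Nonempty κ] (hf : ∀ j, ContinuousOn (f j) (Xs j))
    (hXs : ∀ j, IsClosed (Xs j)) {K : κ → Set X} (hK : Directed (· ⊇ ·) K)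
    (hKc : ∀ i, IsCompact (K i)) :
    localHutchinson f Xs (⋂ i, K i) = ⋂ i, localHutchinson f Xs (K i) := by
  refine Subset.antisymm mono.map_iInf_le fun x hx => ?_
  have isClosed_fiber : IsClosed (⋃ j, Xs j ∩ f j ⁻¹' {x}) :=
    isClosed_iUnion_of_finite fun j => (hf j).preimage_isClosed_of_isClosed (hXs j)
      isClosed_singleton
  rw [mem_iff_nonempty_inter, iInter_inter]
  exact IsCompact.nonempty_iInter_of_directed_nonempty_isCompact_isClosed _
    (hK.mono_comp (· ⊇ ·) (g := (· ∩ _)) fun _ _ => inter_subset_inter_left _)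
    (fun i => mem_iff_nonempty_inter.1 (mem_iInter.1 hx i))
    (fun i => (hKc i).inter_right isClosed_fiber)
    (fun i => (hKc i).isClosed.inter isClosed_fiber)

theorem map_iInter_iterate (hf : ∀ j, ContinuousOn (f j) (Xs j)) (hXs : ∀ j, IsClosed (Xs j))
    {C : Set X} (hC : IsCompact C) (hFC : localHutchinson f Xs C ⊆ C) :
    localHutchinson f Xs (⋂ k : ℕ, (localHutchinson f Xs)^[k] C) =
      ⋂ k : ℕ, (localHutchinson f Xs)^[k] C := by
  have hanti := mono.antitone_iterate_of_map_le hFC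
  rw [map_iInter_of_directed hf hXs hanti.directed_ge (isCompact_iterate hf hXs hC)]
  simp only [← Function.iterate_succ_apply']
  exact hanti.iInf_nat_add 1

end localHutchinson

theorem attractor_eq_iInter_iterates_global_general {X ι : Type*} [MetricSpace X] [Finite ι]
    {f : ι → X → X} {K : ι → ℝ≥0} (hf : ∀ j, ContractingWith (K j) (f j))
    {Xs : ι → Set X} (hXs : ∀ j, IsClosed (Xs j))
    {C : Set X} (hCne : C.Nonempty) (hC : IsCompact C) (hfC : ∀ j, MapsTo (f j) C C)
    (hA : IsBounded (localAttractor f Xs)) :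
    localAttractor f Xs = (⋂ k : ℕ, (localHutchinson f Xs)^[k] C) ∧
      Tendsto (fun k : ℕ => hausdorffEDist ((localHutchinson f Xs)^[k] C) (localAttractor f Xs))
        atTop (𝓝 0) := by
  have hcont : ∀ j, ContinuousOn (f j) (Xs j) := fun j => (hf j).2.continuous.continuousOn
  have hFC : localHutchinson f Xs C ⊆ C :=
    (localHutchinson.subset_iUnion_image C).trans (iUnion_subset fun j => (hfC j).image_subset)
  obtain ⟨L, hL, hfL⟩ := exists_lt_one_forall_lipschitzWith hf
  have subset_of_fixed : ∀ B, localHutchinson f Xs B = B → B ⊆ C := fun B hB =>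
    hC.isClosed.closure_eq ▸ subset_closure_of_subset_iUnion_image hL hfL hCne hfC
      (hA.subset (subset_sUnion_of_mem hB))
      (hB.ge.trans (localHutchinson.subset_iUnion_image B))
  have attractor_eq : localAttractor f Xs = ⋂ k : ℕ, (localHutchinson f Xs)^[k] C := by
    refine (sUnion_subset fun B hB => subset_iInter fun k => ?_).antisymm
      (subset_sUnion_of_mem (localHutchinson.map_iInter_iterate hcont hXs hC hFC))
    rw [← Function.iterate_fixed hB k]
    exact localHutchinson.mono.iterate k (subset_of_fixed B hB)
  refine ⟨attractor_eq, ?_⟩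
  rw [attractor_eq]
  exact tendsto_hausdorffEDist_iInter_of_antitone
    (localHutchinson.mono.antitone_iterate_of_map_le hFC)
    (localHutchinson.isCompact_iterate hcont hXs hC)

end

/-- Let `A_R` be a nonempty compact set invariant under a global
contractive IFS `(f j)` on a compact metric space, and let `F` be the local
Hutchinson–Barnsley operator of the local IFS obtained by restricting each `f j`
to a closed set `X_j`, with local attractor `A`. If `A ≠ ∅`, then
`A = ⋂ k, F^[k] A_R` and `hausdorffDist (F^[k] A_R) A → 0`. -/
theorem attractor_eq_iInter_iterates_global {X : Type*} [MetricSpace X] [CompactSpace X]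
    {n : ℕ} (hn : 0 < n)
    (f : Fin n → X → X)
    (lam : Fin n → ℝ) (hlam0 : ∀ j, 0 ≤ lam j) (hlam1 : ∀ j, lam j < 1)
    (hcontr : ∀ j, ∀ x y : X, dist (f j x) (f j y) ≤ lam j * dist x y)
    (AR : Set X) (hARne : AR.Nonempty) (hARc : IsCompact AR)
    (hAR : ⋃ j, f j '' AR = AR)
    (Xs : Fin n → Set X) (hXs : ∀ j, IsClosed (Xs j))
    (F : Set X → Set X) (hF : ∀ B, F B = ⋃ j, f j '' (B ∩ Xs j))
    (A : Set X) (hA : A = ⋃₀ {B : Set X | F B = B}) (hAne : A.Nonempty) :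
    A = (⋂ k : ℕ, F^[k] AR) ∧
      Tendsto (fun k : ℕ => Metric.hausdorffDist (F^[k] AR) A) atTop (nhds 0) := by
  obtain rfl : F = localHutchinson f Xs := funext hF
  subst hA
  obtain ⟨attractor_eq, tendsto_edist⟩ := attractor_eq_iInter_iterates_global_general
    (K := fun j => ⟨lam j, hlam0 j⟩) (fun j => ⟨hlam1 j, .of_dist_le_mul (hcontr j)⟩) hXs hARne hARc
    (fun j => Set.mapsTo_iff_image_subset.2 (Set.iUnion_subset_iff.1 hAR.subset j))
    Metric.isBounded_of_compactSpace
  exact ⟨attractor_eq, (ENNReal.tendsto_toReal ENNReal.zero_ne_top).comp tendsto_edist⟩
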